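/- Let G be a strongly connected countable directed graph, F : E → ℝ a function, β ∈ ℝ and v a vertex. The following are equivalent: (1) Σ_{k≥1} l^k_{vv}(β) = 1; (2) A(β) is recurrent and limsup_n (A(β)ⁿ_{vv})^{1/n} = 1. -/

import Mathlib

open scoped ENNReal NNReal Classical
open Filter MeasureTheory

/-- A countable directed graph: countable sets of vertices and edges with
source and range maps. -/
structure DirGraph where
  V : Type
  E : Type
  countV : Countable V
  countE : Countable E
  s : E → V
  r : E → V

namespace DirGraph

attribute [instance] countV countE

variable (G : DirGraph)

/-- `μ` is a finite path (a vertex counts as the empty path). -/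
def IsPath (μ : List G.E) : Prop := μ.Chain' (fun e f => G.r e = G.s f)

/-- `μ` is a finite path from `u` to `w`. -/
def IsPathFrom (μ : List G.E) (u w : G.V) : Prop :=
  G.IsPath μ ∧ (∀ e ∈ μ.head?, G.s e = u) ∧ (∀ e ∈ μ.getLast?, G.r e = w) ∧ (μ = [] → u = w)

/-- A function `F : E → ℝ` extended to finite paths. -/
def Fsum (F : G.E → ℝ) (μ : List G.E) : ℝ := (μ.map F).sum

/-- The matrix `A(β)` over the vertices, with entries in `[0,∞]`:
`A(β)_{uw} = Σ_{e : u → w} e^{-β F(e)}`. -/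
noncomputable def Amat (F : G.E → ℝ) (β : ℝ) (u w : G.V) : ℝ≥0∞ :=
  ∑' e : {e : G.E // G.s e = u ∧ G.r e = w}, ENNReal.ofReal (Real.exp (-β * F e.1))

/-- The powers of the matrix `A(β)`, defined recursively; `A(β)⁰` is the identity matrix. -/
noncomputable def Apow (F : G.E → ℝ) (β : ℝ) : ℕ → G.V → G.V → ℝ≥0∞
  | 0, u, w => if u = w then 1 else 0
  | n + 1, u, w => ∑' x : G.V, G.Amat F β u x * Apow F β n x w

/-- A sink is a vertex emitting no edges. -/
def IsSink (v : G.V) : Prop := ∀ e : G.E, G.s e ≠ v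

/-- An infinite emitter is a vertex emitting infinitely many edges. -/
def InfEmitter (v : G.V) : Prop := {e : G.E | G.s e = v}.Infinite

/-- A set of vertices is hereditary when it is closed under following edges. -/
def Hereditary (H : Set G.V) : Prop := ∀ e : G.E, G.s e ∈ H → G.r e ∈ H

/-- A set of vertices `H` is saturated when every vertex of `V ∖ V∞` all of whose
successors lie in `H` belongs to `H`. -/
def Saturated (H : Set G.V) : Prop :=
  ∀ v : G.V, ¬ G.IsSink v → ¬ G.InfEmitter v → (∀ e : G.E, G.s e = v → G.r e ∈ H) → v ∈ H

/-- `G` is cofinal when the only nonempty hereditary and saturated set of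
vertices is the whole vertex set. -/
def Cofinal : Prop :=
  ∀ H : Set G.V, H.Nonempty → G.Hereditary H → G.Saturated H → H = Set.univ

/-- The set of non-wandering vertices: those lying on a loop of length ≥ 1. -/
def NW : Set G.V := {v | ∃ μ : List G.E, μ ≠ [] ∧ G.IsPathFrom μ v v}

/-- `G` is strongly connected when there is a finite path between any two vertices. -/
def StronglyConnected : Prop := ∀ u w : G.V, ∃ μ : List G.E, G.IsPathFrom μ u w

/-- `G` is row-finite when every vertex emits only finitely many edges. -/
def RowFinite : Prop := ∀ v : G.V, {e : G.E | G.s e = v}.Finite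

/-- `ψ` is an `A(β)`-harmonic vector. -/
def Harmonic (F : G.E → ℝ) (β : ℝ) (ψ : G.V → ℝ≥0) : Prop :=
  ∀ v : G.V, ∑' w : G.V, G.Amat F β v w * ψ w = (ψ v : ℝ≥0∞)

/-- `A(β)` is transient when `Σ_n A(β)ⁿ_{vv} < ∞` for every vertex. -/
def Transient (F : G.E → ℝ) (β : ℝ) : Prop :=
  ∀ v : G.V, ∑' n : ℕ, G.Apow F β n v v ≠ ⊤

/-- `A(β)` is recurrent when `Σ_n A(β)ⁿ_{vv} = ∞` for some vertex. -/
def Recurrent (F : G.E → ℝ) (β : ℝ) : Prop :=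
  ∃ v : G.V, ∑' n : ℕ, G.Apow F β n v v = ⊤

/-- An exit path: a sequence of vertices joined by edges which leaves every
finite set of vertices. -/
def IsExitPath (t : ℕ → G.V) : Prop :=
  (∀ i : ℕ, ∃ e : G.E, G.s e = t i ∧ G.r e = t (i + 1)) ∧
  ∀ M : Set G.V, M.Finite → ∃ N : ℕ, ∀ i : ℕ, N ≤ i → t i ∉ M

/-- Tail equivalence of vertex sequences. -/
def TailEquiv (t t' : ℕ → G.V) : Prop :=
  ∃ k : ℤ, ∃ N : ℕ, ∀ i : ℕ, N ≤ i → 0 ≤ (i : ℤ) + k ∧ t ((i : ℤ) + k).toNat = t' i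

/-- A simple loop based at `v`: a loop which returns to `v` only at the very end. -/
def IsSimpleLoop (v : G.V) (μ : List G.E) : Prop :=
  μ ≠ [] ∧ G.IsPathFrom μ v v ∧
  ∀ (i : ℕ) (h : i + 1 < μ.length), G.r (μ.get ⟨i, Nat.lt_of_succ_lt h⟩) ≠ v

/-- `lⁿ_{vv}(β)`: the weighted number of simple loops of length `n` based at `v`. -/
noncomputable def loopSum (F : G.E → ℝ) (β : ℝ) (v : G.V) (n : ℕ) : ℝ≥0∞ :=
  ∑' μ : {μ : List G.E // μ.length = n ∧ G.IsSimpleLoop v μ},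
    ENNReal.ofReal (Real.exp (-β * G.Fsum F μ.1))

/-- The space `P(G)` of infinite paths in `G`. -/
def PathSpace : Type := {p : ℕ → G.E // ∀ i : ℕ, G.r (p i) = G.s (p (i + 1))}

/-- The Borel σ-algebra of `P(G)` as a subspace of the product `E^ℕ` with `E`
discrete (for a countable discrete space, the Borel σ-algebra is the power set). -/
instance : MeasurableSpace G.PathSpace :=
  letI : MeasurableSpace G.E := ⊤
  inferInstanceAs (MeasurableSpace {p : ℕ → G.E // ∀ i : ℕ, G.r (p i) = G.s (p (i + 1))})

/-- The cylinder set `Z'(v)` of infinite paths starting at the vertex `v`. -/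
def cylV (v : G.V) : Set G.PathSpace := {p | G.s (p.1 0) = v}

/-- The cylinder set `Z'(μ)` of infinite paths beginning with the finite path `μ`. -/
def cylP (μ : List G.E) : Set G.PathSpace :=
  {p | ∀ (i : ℕ) (h : i < μ.length), p.1 i = μ.get ⟨i, h⟩}

/-- The set `P(G)_wan` of wandering infinite paths: those visiting each vertex
only finitely many times. -/
def wanSet : Set G.PathSpace := {p | ∀ v : G.V, {i : ℕ | G.s (p.1 i) = v}.Finite}

end DirGraph

/-!
Decomposing a loop at `v` at its first return to `v` gives the renewal equation
`A(β)ⁿ⁺¹_vv = ∑ lᵏ⁺¹_vv(β) A(β)ⁿ⁻ᵏ_vv`, that is `a(x) = 1 + l(x) a(x)` for the generating functions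
of `A(β)ⁿ_vv` and `lⁿ_vv(β)`. Renewal sequences are supermultiplicative, so the upper limit of their
`n`-th roots is at most `1` exactly when all their terms are, and by the generating functions this
happens exactly when `l(1) ≤ 1`; in that case `a(1) = ∞` exactly when `l(1) = 1`. By the root test
`a(1) = ∞` also forces the upper limit to be at least `1`. Strong connectedness
carries the divergence of `∑ A(β)ⁿ_ww` from one vertex `w` to all of them.
-/

open Finset.HasAntidiagonal (antidiagonal mem_antidiagonal)

section ENNReal

theorem tsum_sum_antidiagonal_eq_tsum_mul_tsum {A : Type*} [AddMonoid A]
    [Finset.HasAntidiagonal A] (f g : A → ℝ≥0∞) :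
    ∑' n, ∑ p ∈ antidiagonal n, f p.1 * g p.2 = (∑' n, f n) * ∑' n, g n := by
  calc ∑' n, ∑ p ∈ antidiagonal n, f p.1 * g p.2
      = ∑' q : Σ n : A, antidiagonal n, f q.2.1.1 * g q.2.1.2 := by
        rw [ENNReal.tsum_sigma']
        exact tsum_congr fun n => (Finset.tsum_subtype _ fun p : A × A => f p.1 * g p.2).symm
    _ = ∑' p : A × A, f p.1 * g p.2 :=
        Finset.HasAntidiagonal.sigmaAntidiagonalEquivProd.tsum_eq fun p : A × A => f p.1 * g p.2
    _ = (∑' n, f n) * ∑' n, g n := by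
        simp_rw [ENNReal.tsum_prod', ENNReal.tsum_mul_left, ENNReal.tsum_mul_right]

theorem tsum_mul_finsetSum_mul {ι κ : Type*} (s : Finset κ) (c : ι → ℝ≥0∞) (f : κ → ι → ℝ≥0∞)
    (g : κ → ℝ≥0∞) :
    ∑' i, c i * ∑ k ∈ s, f k i * g k = ∑ k ∈ s, (∑' i, c i * f k i) * g k := by
  simp_rw [Finset.mul_sum, ← ENNReal.tsum_mul_right, mul_assoc]
  exact Summable.tsum_finsetSum fun _ _ => ENNReal.summable

theorem tsum_le_of_forall_lt_one_tsum_mul_pow_le {ι : Type*} {f : ι → ℝ≥0∞} (e : ι → ℕ)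
    {C : ℝ≥0∞} (h : ∀ x < 1, ∑' i, f i * x ^ e i ≤ C) : ∑' i, f i ≤ C := by
  rw [ENNReal.tsum_eq_iSup_sum]
  refine iSup_le fun s => ?_
  have : (nhdsWithin (1 : ℝ≥0∞) (Set.Iio 1)).NeBot := nhdsLT_neBot_of_exists_lt ⟨0, one_pos⟩
  have hlim : Tendsto (fun x : ℝ≥0∞ => ∑ i ∈ s, f i * x ^ e i) (nhdsWithin 1 (Set.Iio 1))
      (nhds (∑ i ∈ s, f i * 1 ^ e i)) :=
    tendsto_finsetSum _ fun i _ => ENNReal.Tendsto.const_mul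
      (((ENNReal.continuous_pow (e i)).tendsto 1).mono_left nhdsWithin_le_nhds) (by simp)
  simp only [one_pow, mul_one] at hlim
  exact le_of_tendsto hlim <| eventually_nhdsWithin_of_forall fun x hx =>
    (ENNReal.sum_le_tsum s).trans (h x hx)

theorem tsum_mul_pow_ne_top_of_le_one {a : ℕ → ℝ≥0∞} (ha : ∀ n, a n ≤ 1) {x : ℝ≥0∞}
    (hx : x < 1) : ∑' n, a n * x ^ n ≠ ⊤ := by
  refine ne_top_of_le_ne_top ?_ (ENNReal.tsum_le_tsum fun n => mul_le_of_le_one_left' (ha n))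
  rw [ENNReal.tsum_geometric]
  exact ENNReal.inv_ne_top.2 (tsub_pos_of_lt hx).ne'

theorem tsum_ne_top_of_limsup_rpow_inv_lt_one {a : ℕ → ℝ≥0∞} (ha : ∀ n, a n ≠ ⊤)
    (h : limsup (fun n : ℕ => a n ^ (n : ℝ)⁻¹) atTop < 1) : ∑' n, a n ≠ ⊤ := by
  obtain ⟨c, hac, hc⟩ := exists_between h
  obtain ⟨N, hN⟩ := eventually_atTop.1
    ((eventually_lt_of_limsup_lt hac).and (eventually_gt_atTop 0))
  have htail (n : ℕ) : a (n + N) ≤ c ^ (n + N) := by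
    obtain ⟨hlt, hpos⟩ := hN (n + N) (Nat.le_add_left N n)
    rw [← ENNReal.rpow_natCast, ← ENNReal.rpow_inv_le_iff (Nat.cast_pos.2 hpos)]
    exact hlt.le
  have hgeom : ∑' n, c ^ (n + N) ≠ ⊤ := by
    simp_rw [pow_add, ENNReal.tsum_mul_right, ENNReal.tsum_geometric]
    refine ENNReal.mul_ne_top ?_ (ENNReal.pow_ne_top hc.ne_top)
    exact ENNReal.inv_ne_top.2 (tsub_pos_of_lt hc).ne'
  rw [← ENNReal.summable.sum_add_tsum_nat_add' (k := N)]
  exact ENNReal.add_ne_top.2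
    ⟨ENNReal.sum_ne_top.2 fun n _ => ha n, ne_top_of_le_ne_top hgeom (ENNReal.tsum_le_tsum htail)⟩

theorem pow_succ_le_of_mul_le_apply_add {N M : Type*} [AddMonoid N] [Monoid M] [Preorder M]
    [MulRightMono M] {a : N → M} (h : ∀ m n, a m * a n ≤ a (m + n)) (m : N) (k : ℕ) :
    a m ^ (k + 1) ≤ a ((k + 1) • m) := by
  induction k with
  | zero => simp
  | succ k ih =>
    rw [pow_succ, succ_nsmul]
    exact (mul_le_mul_left ih _).trans (h _ _)

theorem rpow_inv_le_limsup_of_mul_le_apply_add {a : ℕ → ℝ≥0∞}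
    (h : ∀ m n, a m * a n ≤ a (m + n)) {m : ℕ} (hm : m ≠ 0) :
    a m ^ (m : ℝ)⁻¹ ≤ limsup (fun n : ℕ => a n ^ (n : ℝ)⁻¹) atTop := by
  refine le_limsup_of_frequently_le (frequently_atTop.2 fun N => ?_) (by isBoundedDefault)
  refine ⟨(N + 1) * m, by nlinarith [Nat.pos_of_ne_zero hm], ?_⟩
  calc a m ^ (m : ℝ)⁻¹
      = (a m ^ (N + 1)) ^ (((N + 1) * m : ℕ) : ℝ)⁻¹ := by
        rw [Nat.cast_mul, mul_inv, ENNReal.rpow_mul, ENNReal.pow_rpow_inv_natCast N.succ_ne_zero]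
    _ ≤ a ((N + 1) * m) ^ (((N + 1) * m : ℕ) : ℝ)⁻¹ :=
        ENNReal.rpow_le_rpow (pow_succ_le_of_mul_le_apply_add h m N) (by positivity)

end ENNReal

/-- `a` is the renewal sequence generated by `l`: every return is decomposed into a first return,
where `l k` is the weight of the first returns after `k + 1` steps, and a further return. -/
structure IsRenewal (l a : ℕ → ℝ≥0∞) : Prop where
  zero : a 0 = 1
  succ (n : ℕ) : a (n + 1) = ∑ p ∈ antidiagonal n, l p.1 * a p.2

namespace IsRenewal

variable {l a : ℕ → ℝ≥0∞}

theorem mul_le_apply_add (h : IsRenewal l a) (m n : ℕ) : a m * a n ≤ a (m + n) := by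
  induction m using Nat.strong_induction_on with
  | _ m ih =>
    cases m with
    | zero => simp [h.zero]
    | succ m =>
      rw [Nat.add_right_comm, h.succ, h.succ, Finset.Nat.sum_antidiagonal_eq_sum_range_succ_mk,
        Finset.Nat.sum_antidiagonal_eq_sum_range_succ_mk, Finset.sum_mul]
      calc ∑ k ∈ Finset.range (m + 1), l k * a (m - k) * a n
          ≤ ∑ k ∈ Finset.range (m + 1), l k * a (m + n - k) := by
            refine Finset.sum_le_sum fun k hk => ?_
            have hkm : k ≤ m := Finset.mem_range_succ_iff.1 hk
            rw [mul_assoc, Nat.sub_add_comm hkm]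
            gcongr
            exact ih _ (by omega)
        _ ≤ ∑ k ∈ Finset.range (m + n + 1), l k * a (m + n - k) :=
            Finset.sum_le_sum_of_subset (Finset.range_mono (by omega))

theorem tsum_mul_pow (h : IsRenewal l a) (x : ℝ≥0∞) :
    ∑' n, a n * x ^ n = 1 + (∑' n, l n * x ^ (n + 1)) * ∑' n, a n * x ^ n := by
  calc ∑' n, a n * x ^ n = 1 + ∑' n, a (n + 1) * x ^ (n + 1) := by
        rw [tsum_eq_zero_add' ENNReal.summable, h.zero, pow_zero, mul_one]
    _ = 1 + ∑' n, ∑ p ∈ antidiagonal n, l p.1 * x ^ (p.1 + 1) * (a p.2 * x ^ p.2) := by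
        congr! 3 with n
        rw [h.succ, Finset.sum_mul]
        refine Finset.sum_congr rfl fun p hp => ?_
        rw [← mem_antidiagonal.1 hp]
        ring
    _ = 1 + (∑' n, l n * x ^ (n + 1)) * ∑' n, a n * x ^ n := by
        rw [tsum_sum_antidiagonal_eq_tsum_mul_tsum (fun n => l n * x ^ (n + 1))
          (fun n => a n * x ^ n)]

theorem tsum_eq_one_add_mul (h : IsRenewal l a) : ∑' n, a n = 1 + (∑' n, l n) * ∑' n, a n := by
  simpa only [one_pow, mul_one] using h.tsum_mul_pow 1

theorem le_one_of_tsum_le_one (h : IsRenewal l a) (hl : ∑' k, l k ≤ 1) (n : ℕ) : a n ≤ 1 := by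
  induction n using Nat.strong_induction_on with
  | _ n ih =>
    cases n with
    | zero => exact h.zero.le
    | succ n =>
      calc a (n + 1) = ∑ k ∈ Finset.range (n + 1), l k * a (n - k) := by
            rw [h.succ, Finset.Nat.sum_antidiagonal_eq_sum_range_succ_mk]
        _ ≤ ∑ k ∈ Finset.range (n + 1), l k :=
            Finset.sum_le_sum fun k _ => mul_le_of_le_one_right' (ih (n - k) (by omega))
        _ ≤ 1 := (ENNReal.sum_le_tsum _).trans hl

theorem tsum_le_one_iff (h : IsRenewal l a) : ∑' k, l k ≤ 1 ↔ ∀ n, a n ≤ 1 := by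
  refine ⟨h.le_one_of_tsum_le_one, fun ha => ?_⟩
  refine tsum_le_of_forall_lt_one_tsum_mul_pow_le (· + 1) fun x hx => ?_
  have hren := h.tsum_mul_pow x
  have hzero : ∑' n, a n * x ^ n ≠ 0 := by
    rw [hren]
    exact (add_pos_of_pos_of_nonneg one_pos zero_le).ne'
  refine (ENNReal.mul_le_mul_iff_left hzero (tsum_mul_pow_ne_top_of_le_one ha hx)).1 ?_
  rw [one_mul]
  exact le_add_self.trans hren.ge

theorem tsum_ne_top_of_tsum_lt_one (h : IsRenewal l a) (hl : ∑' k, l k < 1) :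
    ∑' n, a n ≠ ⊤ := by
  have hbound : ∑' n, a n ≤ (1 - ∑' k, l k)⁻¹ := by
    refine tsum_le_of_forall_lt_one_tsum_mul_pow_le id fun x hx => ?_
    have hfin := tsum_mul_pow_ne_top_of_le_one (h.tsum_le_one_iff.1 hl.le) hx
    have hle : ∑' k, l k * x ^ (k + 1) ≤ ∑' k, l k :=
      ENNReal.tsum_le_tsum fun k => mul_le_of_le_one_right' (pow_le_one' hx.le _)
    simp only [id]
    rw [ENNReal.le_inv_iff_mul_le, mul_comm, ENNReal.sub_mul fun _ _ => hfin, one_mul,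
      tsub_le_iff_right]
    exact (h.tsum_mul_pow x).le.trans (by gcongr)
  exact ne_top_of_le_ne_top (ENNReal.inv_ne_top.2 (tsub_pos_of_lt hl).ne') hbound

theorem tsum_eq_top_iff (h : IsRenewal l a) (hl : ∑' k, l k ≤ 1) :
    ∑' n, a n = ⊤ ↔ ∑' k, l k = 1 := by
  refine ⟨fun ha => hl.eq_of_not_lt fun hlt => h.tsum_ne_top_of_tsum_lt_one hlt ha, fun hl => ?_⟩
  have hren := h.tsum_eq_one_add_mul
  rw [hl, one_mul, add_comm] at hren
  by_contra hfin
  exact (ENNReal.lt_add_right hfin one_ne_zero).ne hren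

theorem limsup_rpow_inv_le_one_iff (h : IsRenewal l a) :
    limsup (fun n : ℕ => a n ^ (n : ℝ)⁻¹) atTop ≤ 1 ↔ ∀ n, a n ≤ 1 := by
  refine ⟨fun hlim n => ?_, fun ha => limsup_le_of_le (by isBoundedDefault) <|
    Eventually.of_forall fun n => ENNReal.rpow_le_one (ha n) (by positivity)⟩
  obtain rfl | hn := eq_or_ne n 0
  · exact h.zero.le
  have hle := (rpow_inv_le_limsup_of_mul_le_apply_add h.mul_le_apply_add hn).trans hlim
  rwa [ENNReal.rpow_inv_le_iff (by positivity), ENNReal.one_rpow] at hle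

theorem tsum_eq_one_iff (h : IsRenewal l a) :
    ∑' k, l k = 1 ↔
      ∑' n, a n = ⊤ ∧ limsup (fun n : ℕ => a n ^ (n : ℝ)⁻¹) atTop = 1 := by
  have hlimsup : limsup (fun n : ℕ => a n ^ (n : ℝ)⁻¹) atTop ≤ 1 ↔ ∑' k, l k ≤ 1 :=
    h.limsup_rpow_inv_le_one_iff.trans h.tsum_le_one_iff.symm
  constructor
  · intro hl
    have htop := (h.tsum_eq_top_iff hl.le).2 hl
    refine ⟨htop, (hlimsup.2 hl.le).eq_of_not_lt fun hlt => ?_⟩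
    refine tsum_ne_top_of_limsup_rpow_inv_lt_one (fun n => ?_) hlt htop
    exact ne_top_of_le_ne_top ENNReal.one_ne_top (h.le_one_of_tsum_le_one hl.le n)
  · rintro ⟨htop, hlim⟩
    exact (h.tsum_eq_top_iff (hlimsup.1 hlim.le)).1 htop

end IsRenewal

namespace DirGraph

section Paths

variable {G : DirGraph}

theorem isPath_iff_isChain {μ : List G.E} :
    G.IsPath μ ↔ μ.IsChain fun e f => G.r e = G.s f :=
  Iff.rfl

theorem isPathFrom_cons {e : G.E} {μ : List G.E} {u w : G.V} :
    G.IsPathFrom (e :: μ) u w ↔ G.s e = u ∧ G.IsPathFrom μ (G.r e) w := by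
  cases μ with
  | nil => simp [IsPathFrom, isPath_iff_isChain]
  | cons f μ =>
    simp only [IsPathFrom, isPath_iff_isChain, List.isChain_cons_cons, List.head?_cons,
      Option.mem_def, Option.some.injEq, forall_eq', List.getLast?_cons_cons, reduceCtorEq,
      false_imp_iff, and_true]
    tauto

/-- `μ` is a path from `u` to `v` which is at `v` only at its end; for `u = v` this leaves only the
empty path. -/
def IsFirstHit (u v : G.V) (μ : List G.E) : Prop :=
  G.IsPathFrom μ u v ∧ ∀ e ∈ μ, G.s e ≠ v

theorem isFirstHit_nil {u v : G.V} : IsFirstHit u v ([] : List G.E) ↔ u = v := by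
  simp [IsFirstHit, IsPathFrom, isPath_iff_isChain]

theorem isFirstHit_cons {u v : G.V} {e : G.E} {μ : List G.E} :
    IsFirstHit u v (e :: μ) ↔ G.s e = u ∧ u ≠ v ∧ IsFirstHit (G.r e) v μ := by
  simp only [IsFirstHit, isPathFrom_cons, List.forall_mem_cons]
  constructor
  · rintro ⟨⟨rfl, hμ⟩, hev, hμv⟩
    exact ⟨rfl, hev, hμ, hμv⟩
  · rintro ⟨rfl, hev, hμ, hμv⟩
    exact ⟨⟨rfl, hμ⟩, hev, hμv⟩

theorem isSimpleLoop_cons {v : G.V} {e : G.E} {μ : List G.E} :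
    G.IsSimpleLoop v (e :: μ) ↔ G.s e = v ∧ IsFirstHit (G.r e) v μ := by
  have hranges (h : G.IsPathFrom (e :: μ) v v) :
      (∀ (i : ℕ) (hi : i + 1 < (e :: μ).length),
        G.r ((e :: μ).get ⟨i, Nat.lt_of_succ_lt hi⟩) ≠ v) ↔ ∀ f ∈ μ, G.s f ≠ v := by
    rw [List.forall_mem_iff_forall_getElem]
    refine forall_congr' fun i => ?_
    simp only [List.length_cons, Nat.add_lt_add_iff_right]
    refine forall_congr' fun hi => ?_
    have hstep : G.r ((e :: μ)[i]'(Nat.lt_succ_of_lt hi)) = G.s μ[i] :=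
      List.isChain_iff_getElem.1 (isPath_iff_isChain.1 h.1) i (Nat.succ_lt_succ hi)
    rw [List.get_eq_getElem, hstep]
  rw [IsSimpleLoop, and_iff_right (List.cons_ne_nil e μ), and_congr_right hranges, isPathFrom_cons,
    and_assoc, IsFirstHit]

end Paths

variable (G : DirGraph) (F : G.E → ℝ) (β : ℝ)

/-- The weight `e^{-β F(μ)}` of a finite path. -/
noncomputable def pathWeight (μ : List G.E) : ℝ≥0∞ :=
  ENNReal.ofReal (Real.exp (-β * G.Fsum F μ))

theorem pathWeight_nil : G.pathWeight F β [] = 1 := by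
  simp [pathWeight, Fsum]

theorem pathWeight_cons (e : G.E) (μ : List G.E) :
    G.pathWeight F β (e :: μ) = G.pathWeight F β [e] * G.pathWeight F β μ := by
  simp only [pathWeight, Fsum, List.map_cons, List.map_nil, List.sum_cons, List.sum_nil, add_zero]
  rw [← ENNReal.ofReal_mul (Real.exp_nonneg _), ← Real.exp_add, mul_add]

theorem pathWeight_ne_zero (μ : List G.E) : G.pathWeight F β μ ≠ 0 :=
  (ENNReal.ofReal_pos.2 (Real.exp_pos _)).ne'

theorem tsum_Amat_mul (u : G.V) (g : G.V → ℝ≥0∞) :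
    ∑' x, G.Amat F β u x * g x =
      ∑' e : G.E, if G.s e = u then G.pathWeight F β [e] * g (G.r e) else 0 := by
  have hentry (x : G.V) : G.Amat F β u x * g x =
      ∑' e : G.E, if x = G.r e then
        (if G.s e = u then G.pathWeight F β [e] * g x else 0) else 0 := by
    rw [Amat, ← ENNReal.tsum_mul_right]
    refine (tsum_subtype {e : G.E | G.s e = u ∧ G.r e = x}
      fun e => ENNReal.ofReal (Real.exp (-β * F e)) * g x).trans (tsum_congr fun e => ?_)
    simp only [Set.indicator_apply, Set.mem_ofPred_eq, pathWeight, Fsum, List.map_cons,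
      List.map_nil, List.sum_singleton, and_comm (a := G.s e = u), ite_and, eq_comm (a := x)]
  simp_rw [hentry]
  rw [ENNReal.tsum_comm]
  exact tsum_congr fun e => tsum_ite_eq (G.r e) _

/-- The total weight of the edge lists of length `n` satisfying `P`. -/
noncomputable def pathSum (n : ℕ) (P : List G.E → Prop) : ℝ≥0∞ :=
  ∑' μ : {μ : List G.E // μ.length = n ∧ P μ}, G.pathWeight F β μ.1

theorem pathSum_zero (P : List G.E → Prop) :
    G.pathSum F β 0 P = if P [] then 1 else 0 := by
  have hle (μ : {μ : List G.E // μ.length = 0 ∧ P μ}) : μ.1 = [] := List.length_eq_zero_iff.1 μ.2.1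
  split_ifs with h
  · have : Unique {μ : List G.E // μ.length = 0 ∧ P μ} :=
      ⟨⟨⟨[], rfl, h⟩⟩, fun μ => Subtype.ext (hle μ)⟩
    rw [pathSum, tsum_eq_single default fun μ hμ => (hμ (Unique.eq_default μ)).elim, hle,
      pathWeight_nil]
  · have : IsEmpty {μ : List G.E // μ.length = 0 ∧ P μ} := ⟨fun μ => h (hle μ ▸ μ.2.2)⟩
    rw [pathSum, tsum_empty]

theorem pathSum_succ (n : ℕ) (P : List G.E → Prop) :
    G.pathSum F β (n + 1) P =
      ∑' e : G.E, G.pathWeight F β [e] * G.pathSum F β n fun μ => P (e :: μ) := by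
  let consEquiv : (Σ e : G.E, {μ : List G.E // μ.length = n ∧ P (e :: μ)}) ≃
      {μ : List G.E // μ.length = n + 1 ∧ P μ} :=
    { toFun q := ⟨q.1 :: q.2.1, congrArg (· + 1) q.2.2.1, q.2.2.2⟩
      invFun
        | ⟨e :: μ, h⟩ => ⟨e, μ, Nat.succ_injective h.1, h.2⟩
      left_inv _ := rfl
      right_inv
        | ⟨_ :: _, _⟩ => rfl }
  rw [pathSum, ← consEquiv.tsum_eq, ENNReal.tsum_sigma']
  refine tsum_congr fun e => ?_
  rw [pathSum, ← ENNReal.tsum_mul_left]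
  exact tsum_congr fun μ => G.pathWeight_cons F β e μ.1

theorem pathSum_succ_of_cons_iff (n : ℕ) {P : List G.E → Prop} {Q : G.V → List G.E → Prop}
    {u : G.V} (h : ∀ e μ, P (e :: μ) ↔ G.s e = u ∧ Q (G.r e) μ) :
    G.pathSum F β (n + 1) P = ∑' x, G.Amat F β u x * G.pathSum F β n (Q x) := by
  rw [pathSum_succ, tsum_Amat_mul]
  refine tsum_congr fun e => ?_
  split_ifs with he
  · simp only [h, he, true_and]
  · simp [h, he, pathSum]

theorem pathSum_isPathFrom (n : ℕ) (u w : G.V) :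
    G.pathSum F β n (G.IsPathFrom · u w) = G.Apow F β n u w := by
  induction n generalizing u with
  | zero => simp [pathSum_zero, Apow, IsPathFrom, isPath_iff_isChain]
  | succ n ih =>
    rw [G.pathSum_succ_of_cons_iff F β n (Q := fun x μ => G.IsPathFrom μ x w)
      fun _ _ => isPathFrom_cons]
    simp only [ih, Apow]

theorem Apow_length_ne_zero {μ : List G.E} {u w : G.V} (hμ : G.IsPathFrom μ u w) :
    G.Apow F β μ.length u w ≠ 0 := by
  rw [← pathSum_isPathFrom]
  exact fun h => G.pathWeight_ne_zero F β μ (ENNReal.tsum_eq_zero.1 h ⟨μ, rfl, hμ⟩)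

/-- The total weight of the paths of length `n` from `u` which reach `v` for the first time at their
end. -/
noncomputable def firstHitSum (n : ℕ) (u v : G.V) : ℝ≥0∞ :=
  G.pathSum F β n (IsFirstHit u v)

theorem firstHitSum_zero (u v : G.V) : G.firstHitSum F β 0 u v = if u = v then 1 else 0 := by
  simp only [firstHitSum, pathSum_zero, isFirstHit_nil]

theorem firstHitSum_succ_self (n : ℕ) (v : G.V) : G.firstHitSum F β (n + 1) v v = 0 := by
  simp only [firstHitSum, pathSum_succ, isFirstHit_cons, ne_eq, not_true_eq_false, false_and,
    and_false]
  simp [pathSum]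

theorem firstHitSum_succ_of_ne (n : ℕ) {u v : G.V} (huv : u ≠ v) :
    G.firstHitSum F β (n + 1) u v = ∑' x, G.Amat F β u x * G.firstHitSum F β n x v :=
  G.pathSum_succ_of_cons_iff F β n fun _ _ => by rw [isFirstHit_cons, and_iff_right huv]

theorem loopSum_succ (n : ℕ) (v : G.V) :
    G.loopSum F β v (n + 1) = ∑' x, G.Amat F β v x * G.firstHitSum F β n x v :=
  G.pathSum_succ_of_cons_iff F β n fun _ _ => isSimpleLoop_cons

theorem Apow_eq_sum_firstHitSum_mul (n : ℕ) (u v : G.V) :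
    G.Apow F β n u v =
      ∑ p ∈ antidiagonal n, G.firstHitSum F β p.1 u v * G.Apow F β p.2 v v := by
  induction n generalizing u with
  | zero => simp [firstHitSum_zero, Apow]
  | succ n ih =>
    rw [Finset.Nat.sum_antidiagonal_succ, firstHitSum_zero]
    obtain rfl | huv := eq_or_ne u v
    · simp [firstHitSum_succ_self]
    · simp only [if_neg huv, zero_mul, zero_add, G.firstHitSum_succ_of_ne F β _ huv, Apow, ih]
      exact tsum_mul_finsetSum_mul (antidiagonal n) (G.Amat F β u)
        (fun (p : ℕ × ℕ) x => G.firstHitSum F β p.1 x v)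
        fun p => G.Apow F β p.2 v v

theorem isRenewal_loopSum_Apow (v : G.V) :
    IsRenewal (fun k => G.loopSum F β v (k + 1)) (fun n => G.Apow F β n v v) where
  zero := if_pos rfl
  succ n := by
    simp only [loopSum_succ]
    calc G.Apow F β (n + 1) v v
        = ∑' x, G.Amat F β v x *
            ∑ p ∈ antidiagonal n, G.firstHitSum F β p.1 x v * G.Apow F β p.2 v v :=
          tsum_congr fun x => by rw [← Apow_eq_sum_firstHitSum_mul]
      _ = ∑ p ∈ antidiagonal n,
            (∑' x, G.Amat F β v x * G.firstHitSum F β p.1 x v) * G.Apow F β p.2 v v :=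
          tsum_mul_finsetSum_mul (antidiagonal n) (G.Amat F β v)
            (fun (p : ℕ × ℕ) x => G.firstHitSum F β p.1 x v)
            fun p => G.Apow F β p.2 v v

theorem Apow_mul_Apow_le (m n : ℕ) (u x w : G.V) :
    G.Apow F β m u x * G.Apow F β n x w ≤ G.Apow F β (m + n) u w := by
  induction m generalizing u with
  | zero =>
    obtain rfl | hux := eq_or_ne u x
    · simp [Apow]
    · simp [Apow, hux]
  | succ m ih =>
    rw [Nat.add_right_comm, Apow, Apow, ← ENNReal.tsum_mul_right]
    refine ENNReal.tsum_le_tsum fun y => ?_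
    rw [mul_assoc]
    gcongr
    exact ih y

theorem tsum_Apow_eq_top_of_isPathFrom {μ ν : List G.E} {u w x : G.V}
    (hμ : G.IsPathFrom μ u w) (hν : G.IsPathFrom ν w x) (hw : ∑' n, G.Apow F β n w w = ⊤) :
    ∑' n, G.Apow F β n u x = ⊤ := by
  refine top_le_iff.1 ?_
  calc ⊤ = G.Apow F β μ.length u w * (∑' n, G.Apow F β n w w) * G.Apow F β ν.length w x := by
        rw [hw, ENNReal.mul_top (G.Apow_length_ne_zero F β hμ),
          ENNReal.top_mul (G.Apow_length_ne_zero F β hν)]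
    _ = ∑' n, G.Apow F β μ.length u w * G.Apow F β n w w * G.Apow F β ν.length w x := by
        rw [ENNReal.tsum_mul_right, ENNReal.tsum_mul_left]
    _ ≤ ∑' n, G.Apow F β (μ.length + n + ν.length) u x :=
        ENNReal.tsum_le_tsum fun n => (mul_le_mul_left (G.Apow_mul_Apow_le F β _ n u w w) _).trans
          (G.Apow_mul_Apow_le F β _ _ u w x)
    _ ≤ ∑' n, G.Apow F β n u x :=
        ENNReal.tsum_comp_le_tsum_of_injective
          ((add_left_injective _).comp (add_right_injective _)) fun n => G.Apow F β n u x

theorem StronglyConnected.recurrent_iff {G : DirGraph} (hSC : G.StronglyConnected) (F : G.E → ℝ)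
    (β : ℝ) (v : G.V) : G.Recurrent F β ↔ ∑' n, G.Apow F β n v v = ⊤ := by
  refine ⟨fun ⟨w, hw⟩ => ?_, fun hv => ⟨v, hv⟩⟩
  obtain ⟨μ, hμ⟩ := hSC v w
  obtain ⟨ν, hν⟩ := hSC w v
  exact G.tsum_Apow_eq_top_of_isPathFrom F β hμ hν hw

end DirGraph

/-- `Σ_k l^k_{vv}(β) = 1` iff `A(β)` is recurrent with spectral radius 1. -/
theorem stmt_13 (G : DirGraph) (hSC : G.StronglyConnected) (F : G.E → ℝ) (β : ℝ) (v : G.V) :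
    (∑' k : ℕ, G.loopSum F β v (k + 1)) = 1 ↔
      (G.Recurrent F β ∧
        Filter.limsup (fun n : ℕ => (G.Apow F β n v v) ^ ((n : ℝ)⁻¹)) Filter.atTop = 1) := by
  rw [hSC.recurrent_iff F β v]
  exact (G.isRenewal_loopSum_Apow F β v).tsum_eq_one_iff
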